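/- Let N be a natural number, let a_1, ..., a_N be distinct positive real numbers, and let A_1, ..., A_N be positive real numbers. Then the vector w_A = (√A_1/a_1, ..., √A_N/a_N) is a cyclic vector for the weighted Cauchy matrix C_{a,A}; that is, the linear span of the vectors {C_{a,A}^n w_A : n ≥ 0} is all of ℂ^N. -/

import Mathlib

/-!
Write `C` for the Cauchy matrix, `D = diag(a)` and `v = v_A`, so that `w_A = D⁻¹ v`. Everything
rests on the Lyapunov identity `D C + C D = v vᵀ`.

If the orbit of `w_A` did not span, the vectors `x` with `xᵀ Cⁿ w_A = 0` for all `n` would form a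
nonzero subspace, invariant under the symmetric matrix `C`, hence containing an eigenvector
`C x = μ x`. Put `y = D⁻¹ x`. Then `vᵀ y = xᵀ w_A = 0`, and the Lyapunov identity applied to `y`
gives `C y = -μ y`. Since `C` is Hermitian, comparing both sides of `x* C x` shows `μ` real, and
comparing both sides of `y* C x`, where `y* x = y* D y > 0`, shows `μ = -conj μ`; so `μ = 0`.

It remains that `C` is injective (`cauchyMatrix_mulVec_injective`). If `C x = 0`, the identity
gives `vᵀ x = 0` and `C D x = 0`; by iteration `vᵀ Dⁿ x = 0` for all `n`, and the Vandermonde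
determinant of the distinct `a_k` forces `x = 0`.
-/

open Matrix MeasureTheory
open scoped ComplexOrder

/-- The weighted Cauchy matrix `C_{a,A} = (√(A_j A_k)/(a_j + a_k))_{j,k}`, as a complex matrix. -/
noncomputable def cauchyMatrix {N : ℕ} (a A : Fin N → ℝ) : Matrix (Fin N) (Fin N) ℂ :=
  Matrix.of fun j k => ((Real.sqrt (A j * A k) / (a j + a k) : ℝ) : ℂ)

/-- The vector `v_A = (√A_1, ..., √A_N)` in `ℂ^N`. -/
noncomputable def vecA {N : ℕ} (A : Fin N → ℝ) : Fin N → ℂ :=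
  fun k => ((Real.sqrt (A k) : ℝ) : ℂ)

/-- The Lyapunov identity `D C + C D = v vᵀ` with `D = diag(a)`, applied to a vector `z`. -/
lemma cauchyMatrix_lyapunov {N : ℕ} (a A : Fin N → ℝ) (ha0 : ∀ k, 0 < a k) (hA : ∀ k, 0 < A k)
    (z : Fin N → ℂ) (j : Fin N) :
    (a j : ℂ) * (cauchyMatrix a A *ᵥ z) j + (cauchyMatrix a A *ᵥ fun k => (a k : ℂ) * z k) j
      = vecA A j * (vecA A ⬝ᵥ z) := by
  simp only [mulVec, dotProduct, Finset.mul_sum, ← Finset.sum_add_distrib]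
  refine Finset.sum_congr rfl fun k _ => ?_
  have h : (a j : ℂ) + a k ≠ 0 := by
    exact_mod_cast (add_pos (ha0 j) (ha0 k)).ne'
  simp only [cauchyMatrix, vecA, Matrix.of_apply, Real.sqrt_mul (hA j).le]
  push_cast
  field_simp

lemma cauchyMatrix_transpose {N : ℕ} (a A : Fin N → ℝ) :
    (cauchyMatrix a A)ᵀ = cauchyMatrix a A := by
  ext j k
  simp [cauchyMatrix, mul_comm (A j), add_comm (a j : ℂ)]

lemma dotProduct_cauchyMatrix_mulVec {N : ℕ} (a A : Fin N → ℝ) (x z : Fin N → ℂ) :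
    x ⬝ᵥ cauchyMatrix a A *ᵥ z = (cauchyMatrix a A *ᵥ x) ⬝ᵥ z := by
  rw [dotProduct_mulVec, ← mulVec_transpose, cauchyMatrix_transpose]

lemma cauchyMatrix_mulVec_star {N : ℕ} (a A : Fin N → ℝ) (z : Fin N → ℂ) :
    cauchyMatrix a A *ᵥ star z = star (cauchyMatrix a A *ᵥ z) := by
  ext j
  simp [mulVec, dotProduct, cauchyMatrix]

lemma vecA_ne_zero {N : ℕ} (A : Fin N → ℝ) (hA : ∀ k, 0 < A k) (j : Fin N) : vecA A j ≠ 0 := by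
  simpa [vecA] using (Real.sqrt_pos.2 (hA j)).ne'

lemma cauchyMatrix_mulVec_injective {N : ℕ} (a A : Fin N → ℝ) (ha : Function.Injective a)
    (ha0 : ∀ k, 0 < a k) (hA : ∀ k, 0 < A k) (x : Fin N → ℂ)
    (hx : cauchyMatrix a A *ᵥ x = 0) : x = 0 := by
  -- Pairing the Lyapunov identity for `z ∈ ker C` with `z*` kills the left-hand side.
  have key : ∀ z : Fin N → ℂ, cauchyMatrix a A *ᵥ z = 0 → vecA A ⬝ᵥ z = 0 := by
    intro z hz
    have h1 : star z ⬝ᵥ cauchyMatrix a A *ᵥ (fun k => (a k : ℂ) * z k) = 0 := by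
      rw [dotProduct_cauchyMatrix_mulVec, cauchyMatrix_mulVec_star, hz]; simp
    have h2 : cauchyMatrix a A *ᵥ (fun k => (a k : ℂ) * z k) = (vecA A ⬝ᵥ z) • vecA A := by
      ext j
      have := cauchyMatrix_lyapunov a A ha0 hA z j
      rw [hz] at this
      simpa [mul_comm] using this
    have h3 : star z ⬝ᵥ vecA A = star (vecA A ⬝ᵥ z) := by
      simp [dotProduct, vecA, mul_comm]
    rw [h2, dotProduct_smul, h3] at h1
    simpa using h1
  have hker : ∀ n : ℕ, cauchyMatrix a A *ᵥ (fun k => (a k : ℂ) ^ n * x k) = 0 := by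
    intro n
    induction n with
    | zero => simpa using hx
    | succ n ih =>
      ext j
      have := cauchyMatrix_lyapunov a A ha0 hA _ j |>.trans (by rw [key _ ih])
      rw [ih] at this
      simpa [pow_succ', mul_assoc] using this
  have hinj : Function.Injective fun k => (a k : ℂ) := fun i j h => ha (Complex.ofReal_injective h)
  have h0 : (fun k => vecA A k * x k) = 0 := by
    refine Matrix.eq_zero_of_forall_pow_sum_mul_pow_eq_zero hinj fun n => ?_
    rw [← key _ (hker n)]
    exact Finset.sum_congr rfl fun k _ => by ring
  ext k
  exact (mul_eq_zero.1 (congrFun h0 k)).resolve_left (vecA_ne_zero A hA k)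

/-- No eigenvector of the Cauchy matrix is orthogonal to `w_A`. -/
lemma cauchyMatrix_eigenvector_eq_zero {N : ℕ} (a A : Fin N → ℝ) (ha : Function.Injective a)
    (ha0 : ∀ k, 0 < a k) (hA : ∀ k, 0 < A k) (x : Fin N → ℂ) (μ : ℂ)
    (hx : cauchyMatrix a A *ᵥ x = μ • x)
    (hw : x ⬝ᵥ (fun k => ((Real.sqrt (A k) / a k : ℝ) : ℂ)) = 0) : x = 0 := by
  by_contra hx0
  have hane : ∀ k, (a k : ℂ) ≠ 0 := fun k => by exact_mod_cast (ha0 k).ne'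
  set y : Fin N → ℂ := fun k => x k / a k with hy
  have hDy : (fun k => (a k : ℂ) * y k) = x := by
    ext k; simp only [hy]; field_simp [hane k]
  have hvy : vecA A ⬝ᵥ y = 0 := by
    rw [← hw]
    refine Finset.sum_congr rfl fun k _ => ?_
    simp only [hy, vecA]
    push_cast
    ring
  have hCy : cauchyMatrix a A *ᵥ y = -μ • y := by
    ext j
    have h := cauchyMatrix_lyapunov a A ha0 hA y j
    rw [hDy, hvy, hx, mul_zero] at h
    apply mul_left_cancel₀ (hane j)
    have hj : x j = a j * y j := (congrFun hDy j).symm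
    simp only [Pi.smul_apply, smul_eq_mul] at h ⊢
    rw [hj] at h
    linear_combination h
  have hreal : μ = star μ := by
    have h := dotProduct_cauchyMatrix_mulVec a A (star x) x
    rw [cauchyMatrix_mulVec_star, hx, star_smul, dotProduct_smul, smul_dotProduct] at h
    exact mul_right_cancel₀ (by simpa using hx0) h
  have hS : star y ⬝ᵥ x ≠ 0 := by
    have hS' : star y ⬝ᵥ x = ((∑ k, a k * Complex.normSq (y k) : ℝ) : ℂ) := by
      rw [← hDy]
      push_cast
      refine Finset.sum_congr rfl fun k _ => ?_
      rw [Complex.normSq_eq_conj_mul_self]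
      simp only [Pi.star_apply, RCLike.star_def]
      ring
    rw [hS']
    obtain ⟨k, hk⟩ := Function.ne_iff.1 hx0
    refine Complex.ofReal_ne_zero.2 (ne_of_gt ?_)
    refine Finset.sum_pos' (fun i _ => mul_nonneg (ha0 i).le (Complex.normSq_nonneg _))
      ⟨k, Finset.mem_univ k, mul_pos (ha0 k) (Complex.normSq_pos.2 ?_)⟩
    exact div_ne_zero hk (hane k)
  have himag : μ = -star μ := by
    have h := dotProduct_cauchyMatrix_mulVec a A (star y) x
    rw [cauchyMatrix_mulVec_star, hx, hCy, star_smul, dotProduct_smul, smul_dotProduct,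
      star_neg] at h
    exact mul_right_cancel₀ hS h
  have hμ : μ = 0 := by
    rw [← hreal] at himag
    exact self_eq_neg.1 himag
  exact hx0 (cauchyMatrix_mulVec_injective a A ha ha0 hA x (by rw [hx, hμ, zero_smul]))

/-- The vector `w_A = (√A_1/a_1, ..., √A_N/a_N)` is cyclic for the weighted
Cauchy matrix: the span of `{C_{a,A}^n w_A : n ≥ 0}` is all of `ℂ^N`. -/
theorem cauchyMatrix_cyclic_wA (N : ℕ) (a A : Fin N → ℝ)
    (ha : Function.Injective a) (ha0 : ∀ k, 0 < a k) (hA : ∀ k, 0 < A k) :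
    Submodule.span ℂ
      (Set.range fun n : ℕ =>
        (cauchyMatrix a A ^ n) *ᵥ (fun k => ((Real.sqrt (A k) / a k : ℝ) : ℂ))) = ⊤ := by
  set w : Fin N → ℂ := fun k => ((Real.sqrt (A k) / a k : ℝ) : ℂ)
  by_contra hne
  obtain ⟨f, hf0, hf⟩ := Submodule.exists_le_ker_of_lt_top _ (lt_top_iff_ne_top.2 hne)
  -- The annihilator of the orbit of `w`, for the bilinear pairing `xᵀ z`.
  let P : Submodule ℂ (Fin N → ℂ) :=
    { carrier := {x | ∀ n : ℕ, x ⬝ᵥ (cauchyMatrix a A ^ n) *ᵥ w = 0}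
      add_mem' := fun {x y} hx hy n => by rw [add_dotProduct, hx n, hy n, add_zero]
      zero_mem' := fun n => zero_dotProduct _
      smul_mem' := fun c x hx n => by rw [smul_dotProduct, hx n, smul_zero] }
  have hPC : ∀ x ∈ P, (cauchyMatrix a A).mulVecLin x ∈ P := fun x hx n => by
    rw [mulVecLin_apply, ← dotProduct_cauchyMatrix_mulVec, mulVec_mulVec, ← pow_succ']
    exact hx (n + 1)
  let x₀ : Fin N → ℂ := fun j => f (Pi.single j 1)
  have hfx : ∀ z, f z = x₀ ⬝ᵥ z := fun z => by
    rw [f.pi_apply_eq_sum_univ z]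
    refine Finset.sum_congr rfl fun j _ => ?_
    rw [smul_eq_mul, mul_comm]
    congr 2
    ext i
    simp [Pi.single_apply, eq_comm]
  have hx₀P : x₀ ∈ P := fun n => by
    rw [← hfx]
    exact hf (Submodule.subset_span ⟨n, rfl⟩)
  have hx₀ : x₀ ≠ 0 := fun h => hf0 (LinearMap.ext fun z => by rw [hfx, h]; simp)
  have : Nontrivial P := ⟨⟨⟨x₀, hx₀P⟩, 0, fun h => hx₀ (congrArg Subtype.val h)⟩⟩
  obtain ⟨μ, hμ⟩ := Module.End.exists_eigenvalue ((cauchyMatrix a A).mulVecLin.restrict hPC)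
  obtain ⟨x, hx⟩ := hμ.exists_hasEigenvector
  have hCx : cauchyMatrix a A *ᵥ (x : Fin N → ℂ) = μ • (x : Fin N → ℂ) :=
    congrArg Subtype.val hx.apply_eq_smul
  refine hx.2 (Subtype.ext (cauchyMatrix_eigenvector_eq_zero a A ha ha0 hA x μ hCx ?_))
  simpa only [pow_zero, one_mulVec] using x.2 0
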